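/- arXiv:0802.0442 — 2 statements merged into one kernel-verified Lean document; each statement's English description precedes it below -/
import Mathlib

section
/- Let A be an infinitesimal Hopf algebra over a field K, with antipode S. Then Ker ε = Prim(A) ⊕ (Ker ε)² as K-vector spaces, and the projection onto Prim(A) along (Ker ε)² in this direct sum is the map −S (restricted to Ker ε). -/
/-!
For a `K`-algebra `R`, the space `Hom_K(A, R)` is an algebra under convolution, with unit
`u = η ∘ ε`. In these algebras two identities are solved by cancelling an invertible factor on the
right.

* In `Hom_K(A, A)`: evaluating `S ⋆ id = u` at `ab` and expanding by the compatibility gives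
  `S(a · -) ⋆ id = S(a) · - - ε(a) id + ε(a) u`. Convolving with `S` on the right yields
  `S(ab) = ε(b) S(a) + ε(a) S(b) - ε(a) ε(b) 1`, so `S` vanishes on `(Ker ε)²` (`antipode_mul`).
* In `Hom_K(A, A ⊗ A)`, with `i = - ⊗ 1` and `j = 1 ⊗ -`, the coproduct is `Δ = i ⋆ j`. Applying
  `Δ` to `S ⋆ id = u` gives `ΔS ⋆ j = u + iS ⋆ j - j`, and convolving with `jS` on the right yields
  `ΔS = iS + jS - u`, so `S` maps `Ker ε` into the primitives (`comul_antipode`).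

A primitive `p` satisfies `S(p) = -p`, so the intersection is zero. Finally
`(S - u) ⋆ (id - u) = 2u - S - id` takes values in `(Ker ε)²`, so `a + S(a) ∈ (Ker ε)²` whenever
`ε(a) = 0`.
-/

open TensorProduct

/-- An infinitesimal bialgebra structure on an associative unital `K`-algebra `A`:
a coassociative counital coproduct `Δ` with counit `ε`, satisfying the compatibility
`Δ(ab) = Δ(a)(1⊗b) + (a⊗1)Δ(b) − a⊗b`. -/
structure InfBialgStr (K A : Type*) [Field K] [Ring A] [Algebra K A] where
  Δ : A →ₗ[K] A ⊗[K] A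
  ε : A →ₗ[K] K
  coassoc : ∀ a : A, (TensorProduct.assoc K A A A) (LinearMap.rTensor A Δ (Δ a))
      = LinearMap.lTensor A Δ (Δ a)
  counit_left : ∀ a : A, (TensorProduct.lid K A) (LinearMap.rTensor A ε (Δ a)) = a
  counit_right : ∀ a : A, (TensorProduct.rid K A) (LinearMap.lTensor A ε (Δ a)) = a
  compat : ∀ a b : A, Δ (a * b) = Δ a * (1 ⊗ₜ[K] b) + (a ⊗ₜ[K] 1) * Δ b - a ⊗ₜ[K] b

/-- The convolution product `f ⋆ g = m ∘ (f ⊗ g) ∘ Δ` on `Hom_K(A, A)`. -/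
noncomputable def conv {K A : Type*} [Field K] [Ring A] [Algebra K A]
    (B : InfBialgStr K A) (f g : A →ₗ[K] A) : A →ₗ[K] A :=
  LinearMap.mul' K A ∘ₗ TensorProduct.map f g ∘ₗ B.Δ

/-- `S` is an antipode for the infinitesimal bialgebra `A`: it is a two-sided inverse of
the identity in the convolution algebra, whose unit is `a ↦ ε(a) 1`. -/
def IsAntipode {K A : Type*} [Field K] [Ring A] [Algebra K A]
    (B : InfBialgStr K A) (S : A →ₗ[K] A) : Prop :=
  conv B S LinearMap.id = Algebra.linearMap K A ∘ₗ B.ε ∧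
  conv B LinearMap.id S = Algebra.linearMap K A ∘ₗ B.ε

/-- The space of primitive elements of `A`: those `p` with `Δ(p) = p ⊗ 1 + 1 ⊗ p`. -/
noncomputable def primSubmodule {K A : Type*} [Field K] [Ring A] [Algebra K A]
    (B : InfBialgStr K A) : Submodule K A :=
  LinearMap.ker (B.Δ - ((TensorProduct.mk K A A).flip 1 + TensorProduct.mk K A A 1))

/-- `(Ker ε)²`: the span of products of two elements of `Ker ε`. -/
noncomputable def kerEpsSq {K A : Type*} [Field K] [Ring A] [Algebra K A]
    (B : InfBialgStr K A) : Submodule K A :=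
  Submodule.span K {z : A | ∃ a b : A, B.ε a = 0 ∧ B.ε b = 0 ∧ z = a * b}

/-! ### Convolution with values in an algebra -/

section InfHopf

variable {K A : Type*} [Field K] [Ring A] [Algebra K A] (B : InfBialgStr K A)
variable {R : Type*} [Ring R] [Algebra K R]

/-- Convolution of linear maps from `A` to an arbitrary `K`-algebra `R`; `conv` is the case
`R = A`. -/
noncomputable def convTo (f g : A →ₗ[K] R) : A →ₗ[K] R :=
  LinearMap.mul' K R ∘ₗ TensorProduct.map f g ∘ₗ B.Δ

/-- The unit `a ↦ ε(a) 1` of the convolution algebra `Hom_K(A, R)`. -/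
noncomputable def convUnit (R : Type*) [Ring R] [Algebra K R] : A →ₗ[K] R :=
  Algebra.linearMap K R ∘ₗ B.ε

theorem convUnit_apply (a : A) : convUnit B R a = B.ε a • (1 : R) := by
  simp [convUnit, Algebra.algebraMap_eq_smul_one]

theorem convTo_assoc (f g h : A →ₗ[K] R) :
    convTo B (convTo B f g) h = convTo B f (convTo B g h) := by
  have key : ∀ t : (A ⊗[K] A) ⊗[K] A,
      LinearMap.mul' K R (TensorProduct.map (LinearMap.mul' K R ∘ₗ TensorProduct.map f g) h t) =
      LinearMap.mul' K R (TensorProduct.map f (LinearMap.mul' K R ∘ₗ TensorProduct.map g h)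
        (TensorProduct.assoc K A A A t)) := by
    intro t
    refine LinearMap.congr_fun (f :=
      LinearMap.mul' K R ∘ₗ TensorProduct.map (LinearMap.mul' K R ∘ₗ TensorProduct.map f g) h)
      (g := LinearMap.mul' K R ∘ₗ
        TensorProduct.map f (LinearMap.mul' K R ∘ₗ TensorProduct.map g h) ∘ₗ
        (TensorProduct.assoc K A A A).toLinearMap) ?_ t
    ext x y z
    simp [mul_assoc]
  ext a
  have h1 := key (LinearMap.rTensor A B.Δ (B.Δ a))
  rw [B.coassoc] at h1
  have e1 : ∀ t : A ⊗[K] A, TensorProduct.map (LinearMap.mul' K R ∘ₗ TensorProduct.map f g) h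
      (LinearMap.rTensor A B.Δ t) = TensorProduct.map (convTo B f g) h t := by
    intro t
    induction t with
    | zero => simp
    | tmul x y => simp [convTo]
    | add x y hx hy => simp only [map_add, hx, hy]
  have e2 : ∀ t : A ⊗[K] A, TensorProduct.map f (LinearMap.mul' K R ∘ₗ TensorProduct.map g h)
      (LinearMap.lTensor A B.Δ t) = TensorProduct.map f (convTo B g h) t := by
    intro t
    induction t with
    | zero => simp
    | tmul x y => simp [convTo]
    | add x y hx hy => simp only [map_add, hx, hy]
  rw [e1, e2] at h1
  exact h1

theorem convUnit_convTo (f : A →ₗ[K] R) : convTo B (convUnit B R) f = f := by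
  have key : ∀ t : A ⊗[K] A, LinearMap.mul' K R (TensorProduct.map (convUnit B R) f t) =
      f (TensorProduct.lid K A (LinearMap.rTensor A B.ε t)) := by
    intro t
    induction t with
    | zero => simp
    | tmul x y => simp [convUnit_apply]
    | add x y hx hy => simp only [map_add, hx, hy]
  ext a
  exact (key _).trans (by rw [B.counit_left])

theorem convTo_convUnit (f : A →ₗ[K] R) : convTo B f (convUnit B R) = f := by
  have key : ∀ t : A ⊗[K] A, LinearMap.mul' K R (TensorProduct.map f (convUnit B R) t) =
      f (TensorProduct.rid K A (LinearMap.lTensor A B.ε t)) := by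
    intro t
    induction t with
    | zero => simp
    | tmul x y => simp [convUnit_apply]
    | add x y hx hy => simp only [map_add, hx, hy]
  ext a
  exact (key _).trans (by rw [B.counit_right])

theorem convTo_add_left (f f' g : A →ₗ[K] R) :
    convTo B (f + f') g = convTo B f g + convTo B f' g := by
  ext a; simp [convTo, TensorProduct.map_add_left]

theorem convTo_sub_left (f f' g : A →ₗ[K] R) :
    convTo B (f - f') g = convTo B f g - convTo B f' g := by
  rw [eq_sub_iff_add_eq, ← convTo_add_left, sub_add_cancel]

theorem convTo_add_right (f g g' : A →ₗ[K] R) :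
    convTo B f (g + g') = convTo B f g + convTo B f g' := by
  ext a; simp [convTo, TensorProduct.map_add_right]

theorem convTo_sub_right (f g g' : A →ₗ[K] R) :
    convTo B f (g - g') = convTo B f g - convTo B f g' := by
  rw [eq_sub_iff_add_eq, ← convTo_add_right, sub_add_cancel]

theorem convTo_smul_left (c : K) (f g : A →ₗ[K] R) :
    convTo B (c • f) g = c • convTo B f g := by
  ext a; simp [convTo, TensorProduct.map_smul_left]

theorem convTo_mulLeft (c : R) (f g : A →ₗ[K] R) :
    convTo B (LinearMap.mulLeft K c ∘ₗ f) g = LinearMap.mulLeft K c ∘ₗ convTo B f g := by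
  have key : ∀ t : A ⊗[K] A,
      LinearMap.mul' K R (TensorProduct.map (LinearMap.mulLeft K c ∘ₗ f) g t) =
      c * LinearMap.mul' K R (TensorProduct.map f g t) := by
    intro t
    induction t with
    | zero => simp
    | tmul x y => simp [mul_assoc]
    | add x y hx hy => simp only [map_add, hx, hy, mul_add]
  ext a
  exact key _

/-- Composition with an algebra homomorphism is multiplicative for convolution. -/
theorem algHom_comp_convTo {R' : Type*} [Ring R'] [Algebra K R'] (φ : R →ₐ[K] R')
    (f g : A →ₗ[K] R) :
    φ.toLinearMap ∘ₗ convTo B f g = convTo B (φ.toLinearMap ∘ₗ f) (φ.toLinearMap ∘ₗ g) := by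
  have key : ∀ t : A ⊗[K] A, φ (LinearMap.mul' K R (TensorProduct.map f g t)) =
      LinearMap.mul' K R'
        (TensorProduct.map (φ.toLinearMap ∘ₗ f) (φ.toLinearMap ∘ₗ g) t) := by
    intro t
    induction t with
    | zero => simp
    | tmul x y => simp
    | add x y hx hy => simp only [map_add, hx, hy]
  ext a
  exact key _

theorem algHom_comp_convUnit {R' : Type*} [Ring R'] [Algebra K R'] (φ : R →ₐ[K] R') :
    φ.toLinearMap ∘ₗ convUnit B R = convUnit B R' := by
  ext a; simp [convUnit_apply]

/-! ### Unit, counit and primitive elements -/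

theorem comul_one : B.Δ 1 = 1 := by
  have h := B.compat 1 1
  rw [← Algebra.TensorProduct.one_def, mul_one, mul_one, one_mul] at h
  have h2 : B.Δ 1 - 1 = 0 := by
    rw [add_sub_assoc] at h
    exact left_eq_add.mp h
  exact sub_eq_zero.mp h2

/-- The counit is multiplicative: applying `ε ⊗ id` to the compatibility at `(a, b)` gives
`∑ ε(a b₁) b₂ = ε(a) b`, and applying `ε` to this gives `ε(ab) = ε(a) ε(b)`. -/
theorem counit_mul (a b : A) : B.ε (a * b) = B.ε a * B.ε b := by
  have e1 : ∀ t : A ⊗[K] A, TensorProduct.lid K A (LinearMap.rTensor A B.ε (t * (1 ⊗ₜ[K] b))) =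
      TensorProduct.lid K A (LinearMap.rTensor A B.ε t) * b := by
    intro t
    induction t with
    | zero => simp
    | tmul x y => simp
    | add x y hx hy => simp only [map_add, add_mul, hx, hy]
  have e2 : ∀ t : A ⊗[K] A,
      B.ε (TensorProduct.lid K A (LinearMap.rTensor A B.ε ((a ⊗ₜ[K] 1) * t))) =
      B.ε (a * TensorProduct.rid K A (LinearMap.lTensor A B.ε t)) := by
    intro t
    induction t with
    | zero => simp
    | tmul x y => simp [mul_comm]
    | add x y hx hy => simp only [map_add, mul_add, hx, hy]
  have h := congrArg (fun t => B.ε (TensorProduct.lid K A (LinearMap.rTensor A B.ε t)))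
    (B.compat a b)
  simp only [map_add, map_sub] at h
  rw [e1, e2, B.counit_left, B.counit_left, B.counit_right] at h
  simp only [LinearMap.rTensor_tmul, TensorProduct.lid_tmul, map_smul, smul_eq_mul] at h
  linear_combination -h

/-- This holds also in the zero algebra, where `ε(1) = 0` because `ε = 0`. -/
theorem counit_smul_one (a : A) : B.ε (B.ε a • (1 : A)) = B.ε a := by
  have h := counit_mul B a 1
  rw [mul_one] at h
  rw [map_smul, smul_eq_mul, ← h]

variable {B}

theorem mem_prim {p : A} : p ∈ primSubmodule B ↔ B.Δ p = p ⊗ₜ[K] 1 + 1 ⊗ₜ[K] p := by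
  simp [primSubmodule, sub_eq_zero]

theorem counit_prim {p : A} (hp : p ∈ primSubmodule B) : B.ε p = 0 := by
  rw [mem_prim] at hp
  have h := B.counit_left p
  rw [hp] at h
  simp only [map_add, LinearMap.rTensor_tmul, TensorProduct.lid_tmul] at h
  -- `h` reads `ε(p) • 1 + ε(1) • p = p`; applying `ε` gives `ε(p) + ε(p) = ε(p)`.
  have h1 := congrArg B.ε h
  have h2 := counit_mul B 1 p
  rw [one_mul] at h2
  rw [map_add, counit_smul_one, map_smul, smul_eq_mul, ← h2] at h1
  exact left_eq_add.mp h1.symm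

/-! ### The antipode -/

variable {S : A →ₗ[K] A}

theorem antipode_left (hS : IsAntipode B S) : convTo B S LinearMap.id = convUnit B A := hS.1

theorem antipode_right (hS : IsAntipode B S) : convTo B LinearMap.id S = convUnit B A := hS.2

/-- `S` is determined on products by `S(a · -) ⋆ id`, which the compatibility computes; hence `S`
kills products of two elements of `Ker ε`. -/
theorem antipode_mul (hS : IsAntipode B S) (a b : A) :
    S (a * b) = B.ε b • S a + B.ε a • S b - (B.ε a * B.ε b) • (1 : A) := by
  have h1 : convTo B (S ∘ₗ LinearMap.mulLeft K a) LinearMap.id =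
      LinearMap.mulLeft K (S a) ∘ₗ LinearMap.id - B.ε a • LinearMap.id
        + B.ε a • convUnit B A := by
    ext c
    have e1 : ∀ t : A ⊗[K] A,
        LinearMap.mul' K A (TensorProduct.map S LinearMap.id (t * (1 ⊗ₜ[K] c))) =
        LinearMap.mul' K A (TensorProduct.map S LinearMap.id t) * c := by
      intro t
      induction t with
      | zero => simp
      | tmul x y => simp [mul_assoc]
      | add x y hx hy => simp only [map_add, add_mul, hx, hy]
    have e2 : ∀ t : A ⊗[K] A,
        LinearMap.mul' K A (TensorProduct.map S LinearMap.id ((a ⊗ₜ[K] 1) * t)) =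
        LinearMap.mul' K A
          (TensorProduct.map (S ∘ₗ LinearMap.mulLeft K a) LinearMap.id t) := by
      intro t
      induction t with
      | zero => simp
      | tmul x y => simp
      | add x y hx hy => simp only [map_add, mul_add, hx, hy]
    have h : LinearMap.mul' K A (TensorProduct.map S LinearMap.id (B.Δ (a * c))) =
        B.ε (a * c) • (1 : A) :=
      (LinearMap.congr_fun (antipode_left hS) (a * c)).trans (convUnit_apply B _)
    have h' : LinearMap.mul' K A (TensorProduct.map S LinearMap.id (B.Δ a)) =
        B.ε a • (1 : A) :=
      (LinearMap.congr_fun (antipode_left hS) a).trans (convUnit_apply B _)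
    rw [B.compat, map_sub, map_add, map_sub, map_add, e1, e2, h', counit_mul] at h
    simp only [TensorProduct.map_tmul, LinearMap.mul'_apply, LinearMap.id_apply, smul_mul_assoc,
      one_mul] at h
    simp only [LinearMap.add_apply, LinearMap.sub_apply, LinearMap.smul_apply,
      LinearMap.comp_apply, LinearMap.id_apply, LinearMap.mulLeft_apply, convUnit_apply, smul_smul]
    rw [← h]
    simp only [convTo, LinearMap.comp_apply]
    abel
  have h2 := congrArg (fun f => convTo B f S) h1
  simp only [convTo_add_left, convTo_sub_left, convTo_smul_left, convTo_mulLeft, convTo_assoc,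
    antipode_right hS, convTo_convUnit, convUnit_convTo] at h2
  have h3 := LinearMap.congr_fun h2 b
  simp only [LinearMap.add_apply, LinearMap.sub_apply, LinearMap.smul_apply,
    LinearMap.comp_apply, LinearMap.mulLeft_apply, convUnit_apply, smul_smul,
    mul_smul_comm, mul_one] at h3
  rw [h3]
  abel

/-- The coproduct of `S(a)`, found by cancelling `1 ⊗ -` on the right of `ΔS ⋆ (1 ⊗ -)` in
`Hom_K(A, A ⊗ A)`; for `a ∈ Ker ε` it says that `S(a)` is primitive. -/
theorem comul_antipode (hS : IsAntipode B S) (a : A) :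
    B.Δ (S a) = S a ⊗ₜ[K] 1 + 1 ⊗ₜ[K] S a - B.ε a • (1 : A ⊗[K] A) := by
  let i : A →ₐ[K] A ⊗[K] A := Algebra.TensorProduct.includeLeft
  let j : A →ₐ[K] A ⊗[K] A := Algebra.TensorProduct.includeRight
  have map_eq : ∀ (f g : A →ₗ[K] A) (t : A ⊗[K] A), LinearMap.mul' K (A ⊗[K] A)
      (TensorProduct.map (i.toLinearMap ∘ₗ f) (j.toLinearMap ∘ₗ g) t) =
      TensorProduct.map f g t := by
    intro f g t
    induction t with
    | zero => simp
    | tmul x y => simp [i, j]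
    | add x y hx hy => simp only [map_add, hx, hy]
  have hΔ : B.Δ = convTo B i.toLinearMap j.toLinearMap := by
    ext c
    have h := map_eq LinearMap.id LinearMap.id (B.Δ c)
    rw [TensorProduct.map_id] at h
    exact h.symm
  have key : ∀ t : A ⊗[K] A,
      B.Δ (LinearMap.mul' K A (TensorProduct.map S LinearMap.id t)) =
      LinearMap.mul' K _ (TensorProduct.map (B.Δ ∘ₗ S) j.toLinearMap t) +
      LinearMap.mul' K _ (TensorProduct.map (i.toLinearMap ∘ₗ S) B.Δ t) -
      LinearMap.mul' K _ (TensorProduct.map (i.toLinearMap ∘ₗ S) j.toLinearMap t) := by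
    intro t
    induction t with
    | zero => simp
    | tmul x y => simp [i, j, B.compat]
    | add x y hx hy => simp only [map_add, hx, hy]; abel
  have h1 : B.Δ ∘ₗ convTo B S LinearMap.id =
      convTo B (B.Δ ∘ₗ S) j.toLinearMap + convTo B (i.toLinearMap ∘ₗ S) B.Δ -
      convTo B (i.toLinearMap ∘ₗ S) j.toLinearMap := by
    ext c
    exact key _
  have h2 : B.Δ ∘ₗ convUnit B A = convUnit B (A ⊗[K] A) := by
    ext c
    simp [convUnit_apply, comul_one]
  have h3 : convTo B (i.toLinearMap ∘ₗ S) B.Δ = j.toLinearMap := by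
    have := algHom_comp_convTo B i S LinearMap.id
    rw [antipode_left hS, algHom_comp_convUnit, LinearMap.comp_id] at this
    rw [hΔ, ← convTo_assoc, ← this, convUnit_convTo]
  have h4 : convTo B j.toLinearMap (j.toLinearMap ∘ₗ S) = convUnit B (A ⊗[K] A) := by
    have := algHom_comp_convTo B j LinearMap.id S
    rw [antipode_right hS, algHom_comp_convUnit, LinearMap.comp_id] at this
    exact this.symm
  rw [antipode_left hS, h2, h3] at h1
  have h5 := congrArg (fun f => convTo B f (j.toLinearMap ∘ₗ S)) h1
  simp only [convTo_add_left, convTo_sub_left, convTo_assoc, h4, convTo_convUnit,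
    convUnit_convTo] at h5
  have h6 := LinearMap.congr_fun h5 a
  simp only [LinearMap.add_apply, LinearMap.sub_apply, LinearMap.comp_apply,
    AlgHom.toLinearMap_apply, convUnit_apply] at h6
  have hi : i (S a) = S a ⊗ₜ[K] 1 := rfl
  have hj : j (S a) = 1 ⊗ₜ[K] S a := rfl
  rw [hi, hj] at h6
  rw [h6]
  abel

theorem antipode_one (hS : IsAntipode B S) : S 1 = B.ε 1 • (1 : A) := by
  have h := LinearMap.congr_fun (antipode_left hS) 1
  rw [convUnit_apply] at h
  simpa [convTo, comul_one, Algebra.TensorProduct.one_def] using h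

theorem counit_one_smul (B : InfBialgStr K A) (a : A) : B.ε 1 • a = a := by
  have h := B.counit_left 1
  rw [comul_one, Algebra.TensorProduct.one_def] at h
  simp only [LinearMap.rTensor_tmul, TensorProduct.lid_tmul] at h
  rw [← one_mul a, ← smul_mul_assoc, h]

theorem antipode_prim (hS : IsAntipode B S) {p : A} (hp : p ∈ primSubmodule B) : S p = -p := by
  have h := LinearMap.congr_fun (antipode_left hS) p
  rw [convUnit_apply, counit_prim hp, zero_smul] at h
  simp only [convTo, LinearMap.comp_apply, mem_prim.mp hp, map_add, TensorProduct.map_tmul,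
    LinearMap.mul'_apply, LinearMap.id_apply, mul_one, antipode_one hS, counit_one_smul,
    one_mul] at h
  exact eq_neg_of_add_eq_zero_left h

theorem antipode_kerEpsSq (hS : IsAntipode B S) {z : A} (hz : z ∈ kerEpsSq B) : S z = 0 := by
  have hle : kerEpsSq B ≤ LinearMap.ker S := by
    refine Submodule.span_le.mpr ?_
    rintro _ ⟨a, b, ha, hb, rfl⟩
    simp [antipode_mul hS, ha, hb]
  exact hle hz

theorem counit_antipode (hS : IsAntipode B S) (a : A) : B.ε (S a) = B.ε a := by
  have key : ∀ t : A ⊗[K] A,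
      B.ε (LinearMap.mul' K A (TensorProduct.map S LinearMap.id t)) =
      B.ε (S (TensorProduct.rid K A (LinearMap.lTensor A B.ε t))) := by
    intro t
    induction t with
    | zero => simp
    | tmul x y => simp [counit_mul, mul_comm]
    | add x y hx hy => simp only [map_add, hx, hy]
  have h := key (B.Δ a)
  rw [B.counit_right] at h
  rw [← h]
  refine (congrArg B.ε (LinearMap.congr_fun (antipode_left hS) a)).trans ?_
  rw [convUnit_apply, counit_smul_one]

/-- The convolution `(S - u) ⋆ (id - u) = 2u - S - id` is a sum of products of elements of
`Ker ε`. -/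
theorem add_antipode_mem (hS : IsAntipode B S) {a : A} (ha : B.ε a = 0) :
    a + S a ∈ kerEpsSq B := by
  have mem : ∀ t : A ⊗[K] A, LinearMap.mul' K A
      (TensorProduct.map (S - convUnit B A) (LinearMap.id - convUnit B A) t) ∈ kerEpsSq B := by
    intro t
    induction t with
    | zero => simp
    | tmul x y =>
      refine Submodule.subset_span ⟨_, _, ?_, ?_, by rw [TensorProduct.map_tmul,
        LinearMap.mul'_apply]⟩
      · rw [LinearMap.sub_apply, map_sub, convUnit_apply, counit_smul_one, counit_antipode hS,
          sub_self]
      · rw [LinearMap.sub_apply, map_sub, convUnit_apply, counit_smul_one, LinearMap.id_apply,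
          sub_self]
    | add x y hx hy => simpa only [map_add] using add_mem hx hy
  have h : convTo B (S - convUnit B A) (LinearMap.id - convUnit B A) a ∈ kerEpsSq B := mem _
  simp only [convTo_sub_left, convTo_sub_right, antipode_left hS, convTo_convUnit,
    convUnit_convTo, LinearMap.sub_apply, convUnit_apply, ha, zero_smul, LinearMap.id_apply] at h
  have h' := neg_mem h
  have e : -(0 - a - (S a - 0)) = a + S a := by abel
  rwa [e] at h'

theorem neg_antipode_mem_prim (hS : IsAntipode B S) {a : A} (ha : B.ε a = 0) :
    -(S a) ∈ primSubmodule B := by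
  refine neg_mem (mem_prim.mpr ?_)
  rw [comul_antipode hS, ha, zero_smul, sub_zero]

end InfHopf

/-- In an infinitesimal Hopf algebra `A` with antipode `S`:
`Ker ε = Prim(A) ⊕ (Ker ε)²`, and the projection onto `Prim(A)` along `(Ker ε)²` in this
direct sum is `−S` (restricted to `Ker ε`): every `a ∈ Ker ε` decomposes as
`a = (−S(a)) + (a + S(a))` with `−S(a) ∈ Prim(A)` and `a + S(a) ∈ (Ker ε)²`. -/
theorem ker_eps_eq_prim_oplus_ker_eps_sq (K A : Type*) [Field K] [Ring A] [Algebra K A]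
    (B : InfBialgStr K A) (S : A →ₗ[K] A) (hS : IsAntipode B S) :
    primSubmodule B ⊓ kerEpsSq B = ⊥ ∧
    primSubmodule B ⊔ kerEpsSq B = LinearMap.ker B.ε ∧
    (∀ a : A, B.ε a = 0 → -(S a) ∈ primSubmodule B ∧ a + S a ∈ kerEpsSq B) := by
  refine ⟨?_, le_antisymm (sup_le ?_ ?_) ?_, ?_⟩
  · rw [eq_bot_iff]
    rintro x ⟨hp, hq⟩
    have h := antipode_prim hS hp
    rw [antipode_kerEpsSq hS hq] at h
    simpa using h.symm
  · intro p hp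
    exact counit_prim hp
  · refine Submodule.span_le.mpr ?_
    rintro _ ⟨a, b, ha, hb, rfl⟩
    simp [counit_mul, ha]
  · intro a ha
    have e : a = -(S a) + (a + S a) := by abel
    rw [e]
    exact Submodule.add_mem_sup (neg_antipode_mem_prim hS ha) (add_antipode_mem hS ha)
  · intro a ha
    exact ⟨neg_antipode_mem_prim hS ha, add_antipode_mem hS ha⟩
end

section
/- There is a well-defined map m : 𝐅 → 𝐅 determined inductively by m(1) = 1 and m(B⁺(F₁)F₂) = B⁺(m(F₂)) m(F₁) for all forests F₁, F₂; m is an involution (m ∘ m = id), it preserves the weight, and it is a decreasing automorphism of the poset (𝐅, ≤): for all forests F, G, F ≤ G if and only if m(G) ≤ m(F). -/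
/-!
Under the left-child / right-sibling correspondence, where `B⁺(F₁)F₂` becomes the binary tree with
left subtree `F₁` and right subtree `F₂`, planar forests are binary trees and `m` is the mirror
reflection `(a, b) ↦ (m b, m a)`. An admissible transformation is a Tamari rotation
`((c, a), b) ↦ (c, (a, b))` performed at some subtree. Reflection turns such a rotation into its
inverse, so it reverses every single step (`FStep.mF_reverse`), hence also the reflexive-transitive
closure; being an involution, it then reverses the order in both directions.
-/

/-- A planar rooted tree: a root together with a finite ordered list of planar rooted trees. -/
inductive PTree : Type
  | node : List PTree → PTree

/-- The weight of a planar tree: its number of vertices. -/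
def PTree.weight : PTree → ℕ
  | .node l => 1 + (l.attach.map (fun x => PTree.weight x.1)).sum
decreasing_by have := List.sizeOf_lt_of_mem x.2; simp; omega

/-- The weight of a planar forest: its total number of vertices. -/
def forestWeight (F : List PTree) : ℕ := (F.map PTree.weight).sum

/-- An admissible transformation of planar forests: pick a vertex `s` which is the leftmost
child of its parent `m`, and move `s` (together with its subtree) so that it becomes either
the child of the parent of `m` immediately to the left of `m` (first kind, obtained from
`congr` and `split`), or a new root-level tree immediately to the left of the tree of `m`
when `m` is a root (second kind, `split` at the top level). -/
inductive FStep : List PTree → List PTree → Prop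
  | split (xs : List PTree) (s : PTree) (sl : List PTree) (ys : List PTree) :
      FStep (xs ++ PTree.node (s :: sl) :: ys) (xs ++ s :: PTree.node sl :: ys)
  | congr (xs ys : List PTree) (l l' : List PTree) :
      FStep l l' → FStep (xs ++ PTree.node l :: ys) (xs ++ PTree.node l' :: ys)

/-- The partial order `≤` on planar forests generated by the admissible transformations:
`F ≤ G` iff `G` is obtained from `F` by finitely many admissible transformations. -/
def ForestLe : List PTree → List PTree → Prop := Relation.ReflTransGen FStep

/-- The involution `m` on planar forests, defined inductively by `m(1) = 1` and
`m(B⁺(F₁)F₂) = B⁺(m(F₂)) m(F₁)` (every nonempty forest being uniquely of the form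
`B⁺(F₁)F₂`). -/
def mF : List PTree → List PTree
  | [] => []
  | .node l :: F₂ => PTree.node (mF F₂) :: mF l

theorem forestWeight_node_cons (l F : List PTree) :
    forestWeight (PTree.node l :: F) = 1 + forestWeight l + forestWeight F := by
  simp [forestWeight, PTree.weight]

theorem mF_mF (F : List PTree) : mF (mF F) = F := by
  induction F using mF.induct with
  | case1 => simp [mF]
  | case2 l F ih₁ ih₂ => simp [mF, ih₁, ih₂]

theorem forestWeight_mF (F : List PTree) : forestWeight (mF F) = forestWeight F := by
  induction F using mF.induct with
  | case1 => simp [mF]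
  | case2 l F ih₁ ih₂ =>
    rw [mF, forestWeight_node_cons, forestWeight_node_cons, ih₁, ih₂]
    omega

/-- In binary-tree terms, a step inside the right subtree. -/
theorem FStep.cons (t : PTree) {F G : List PTree} (h : FStep F G) : FStep (t :: F) (t :: G) := by
  cases h with
  | split xs s sl ys => exact FStep.split (t :: xs) s sl ys
  | congr xs ys l l' h => exact FStep.congr (t :: xs) ys l l' h

/-- A step inside the right subtree of a forest is reflected to a step inside the left subtree. -/
theorem mF_step_append_left (xs : List PTree) {F G : List PTree} (h : FStep (mF G) (mF F)) :
    FStep (mF (xs ++ G)) (mF (xs ++ F)) := by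
  induction xs with
  | nil => exact h
  | cons t xs ih =>
    obtain ⟨l⟩ := t
    simpa [mF] using FStep.congr [] (mF l) _ _ ih

/-- Reflection reverses each rotation. -/
theorem FStep.mF_reverse {F G : List PTree} (h : FStep F G) : FStep (mF G) (mF F) := by
  induction h with
  | split xs s sl ys =>
    apply mF_step_append_left
    obtain ⟨c⟩ := s
    simpa [mF] using FStep.split [] (PTree.node (mF ys)) (mF sl) (mF c)
  | congr xs ys l l' _ ih =>
    apply mF_step_append_left
    simpa [mF] using ih.cons (PTree.node (mF ys))

theorem ForestLe.mF_reverse {F G : List PTree} (h : ForestLe F G) : ForestLe (mF G) (mF F) := by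
  induction h with
  | refl => exact Relation.ReflTransGen.refl
  | tail _ h ih => exact Relation.ReflTransGen.head h.mF_reverse ih

/-- `m` satisfies (and is the unique map satisfying) `m(1) = 1` and
`m(B⁺(F₁)F₂) = B⁺(m(F₂)) m(F₁)`; it is an involution preserving the weight, and it is a
decreasing automorphism of the poset of planar forests: `F ≤ G ⟺ m(G) ≤ m(F)`. -/
theorem mF_decreasing_involution :
    (mF [] = [] ∧ ∀ (F₁ F₂ : List PTree), mF (PTree.node F₁ :: F₂)
      = PTree.node (mF F₂) :: mF F₁) ∧
    (∀ m' : List PTree → List PTree,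
      (m' [] = [] ∧ ∀ (F₁ F₂ : List PTree), m' (PTree.node F₁ :: F₂)
        = PTree.node (m' F₂) :: m' F₁) → m' = mF) ∧
    (∀ F : List PTree, mF (mF F) = F) ∧
    (∀ F : List PTree, forestWeight (mF F) = forestWeight F) ∧
    (∀ F G : List PTree, ForestLe F G ↔ ForestLe (mF G) (mF F)) := by
  refine ⟨⟨by simp [mF], fun F₁ F₂ => by simp [mF]⟩, ?_, mF_mF, forestWeight_mF, fun F G =>
    ⟨ForestLe.mF_reverse, fun h => by simpa only [mF_mF] using h.mF_reverse⟩⟩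
  rintro m' ⟨h_nil, h_cons⟩
  funext F
  induction F using mF.induct with
  | case1 => simp [mF, h_nil]
  | case2 l F ih₁ ih₂ => simp [mF, h_cons, ih₁, ih₂]
end
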